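/- arXiv:0906.1057 — 14 statements merged into one kernel-verified Lean document; each statement's English description precedes it below -/
import Mathlib

section
/- Let K be a field and q ∈ K nonzero with q⁴ ≠ −1 and 2_q := q + q⁻¹ ≠ 0. Set w = (q²+1)/(q⁴+1). Then the 2×2 matrices H = w·diag(q, −q⁻¹), B = w·q⁻¹·E₁₂, C = w·q·E₂₁ satisfy the SL(R_q,ℏ) relations with ℏ = 1: q²HB − BH = 2_q·B; q²CH − HC = 2_q·C; 2_q·q(BC − CB) + (q²−1)H² = 2_q·H. -/
/-- The sl-reduction of the fundamental representation of the mREA: the stated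
2×2 matrices satisfy the `SL(R_q,ℏ)` relations with `ℏ = 1`. -/
theorem stmt_3 (K : Type*) [Field K] (q : K) (hq : q ≠ 0)
    (hq4 : q ^ 4 ≠ -1) (h2q : q + q⁻¹ ≠ 0)
    (w : K) (hw : w = (q ^ 2 + 1) / (q ^ 4 + 1))
    (H B C : Matrix (Fin 2) (Fin 2) K)
    (hH : H = w • !![q, 0; 0, -q⁻¹])
    (hB : B = w • !![0, q⁻¹; 0, 0])
    (hC : C = w • !![0, 0; q, 0]) :
    q ^ 2 • (H * B) - B * H = (q + q⁻¹) • B ∧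
    q ^ 2 • (C * H) - H * C = (q + q⁻¹) • C ∧
    ((q + q⁻¹) * q) • (B * C - C * B) + (q ^ 2 - 1) • (H * H) = (q + q⁻¹) • H := by
  have h4 : q ^ 4 + 1 ≠ 0 := fun h => hq4 (eq_neg_of_add_eq_zero_left h)
  have hw' : w * (q ^ 4 + 1) = q ^ 2 + 1 := by rw [hw]; field_simp
  clear hw
  subst hH hB hC
  refine ⟨?_, ?_, ?_⟩ <;> ext i j <;> fin_cases i <;> fin_cases j <;>
    simp [Matrix.mul_apply, Fin.sum_univ_two]
  all_goals field_simp
  all_goals first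
    | linear_combination hw'
    | linear_combination w * hw'
    | linear_combination -hw'
    | linear_combination -w * hw'
end

section
/- Let K be a field, q ∈ K nonzero, ℏ ∈ K, and let A be a unital associative K-algebra containing elements a,b,c,d satisfying the modified reflection equation algebra relations with parameter ℏ. Then the elements ℓ = q⁻¹a + qd and Cas = q⁻¹a² + q⁻¹bc + q·cb + q·d² commute with each of a, b, c, d. -/
/-- In any unital associative algebra whose elements `a,b,c,d` satisfy the relations
of the modified reflection equation algebra `𝓛(R_q,ℏ)` (standard `SL(2)` case), the
quantum trace `ℓ = q⁻¹a + qd` and the q-Casimir `Cas = q⁻¹a² + q⁻¹bc + q·cb + q·d²`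
commute with each of `a,b,c,d`. -/
theorem stmt_4 (K : Type*) [Field K] (A : Type*) [Ring A] [Algebra K A]
    (q ℏ : K) (hq : q ≠ 0) (a b c d : A)
    (r1 : q • (a * b) - q⁻¹ • (b * a) = ℏ • b)
    (r2 : q • (c * a) - q⁻¹ • (a * c) = ℏ • c)
    (r3 : a * d - d * a = 0)
    (r4 : q • (b * c - c * b) - (q - q⁻¹) • (a * (d - a)) = ℏ • (a - d))
    (r5 : q • (c * d - d * c) - (q - q⁻¹) • (c * a) = -(ℏ • c))
    (r6 : q • (d * b - b * d) - (q - q⁻¹) • (a * b) = -(ℏ • b)) :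
    (∀ x ∈ ({a, b, c, d} : Set A),
      (q⁻¹ • a + q • d) * x = x * (q⁻¹ • a + q • d)) ∧
    (∀ x ∈ ({a, b, c, d} : Set A),
      (q⁻¹ • (a * a) + q⁻¹ • (b * c) + q • (c * b) + q • (d * d)) * x =
        x * (q⁻¹ • (a * a) + q⁻¹ • (b * c) + q • (c * b) + q • (d * d))) := by
  have e1 : b * a = (q * q) • (a * b) - (q * ℏ) • b := by
    rw [mul_smul q ℏ, ← r1]; match_scalars <;> field_simp <;> ring
  have e2 : a * c = (q * q) • (c * a) - (q * ℏ) • c := by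
    rw [mul_smul q ℏ, ← r2]; match_scalars <;> field_simp <;> ring
  have e3 : d * a = a * d := (sub_eq_zero.mp r3).symm
  have e4 : b * c = c * b + (1 - q⁻¹ * q⁻¹) • (a * d) - (1 - q⁻¹ * q⁻¹) • (a * a)
      + (q⁻¹ * ℏ) • a - (q⁻¹ * ℏ) • d := by
    have h : q⁻¹ • (ℏ • (a - d)) = (q⁻¹ * ℏ) • a - (q⁻¹ * ℏ) • d := by module
    rw [add_sub_assoc, ← h, ← r4, mul_sub]; match_scalars <;> field_simp <;> ring
  have e5 : d * c = c * d - (1 - q⁻¹ * q⁻¹) • (c * a) + (q⁻¹ * ℏ) • c := by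
    have h : (q⁻¹ * ℏ) • c = - (q⁻¹ • (-(ℏ • c))) := by module
    rw [h, ← r5]; match_scalars <;> field_simp <;> ring
  have e6 : b * d = d * b - (1 - q⁻¹ * q⁻¹) • (a * b) + (q⁻¹ * ℏ) • b := by
    have h : (q⁻¹ * ℏ) • b = - (q⁻¹ • (-(ℏ • b))) := by module
    rw [h, ← r6]; match_scalars <;> field_simp <;> ring
  have F {u v w : A} (x : A) (h : u * v = w) : u * (v * x) = w * x := by
    rw [← mul_assoc, h]
  have f1 := fun x : A => F x e1
  have f2 := fun x : A => F x e2
  have f3 := fun x : A => F x e3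
  have f4 := fun x : A => F x e4
  have f5 := fun x : A => F x e5
  have f6 := fun x : A => F x e6
  clear r1 r2 r3 r4 r5 r6
  constructor
  all_goals
    intro x hx
    simp only [Set.mem_insert_iff, Set.mem_singleton_iff] at hx
    rcases hx with rfl | rfl | rfl | rfl
    all_goals
      simp only [mul_add, add_mul, mul_sub, sub_mul, smul_mul_assoc, mul_smul_comm, mul_assoc,
        e1, e2, e3, e4, e5, e6, f1, f2, f3, f4, f5, f6]
      try (match_scalars <;> field_simp <;> ring)
end

section
/- Let K be a field, q ∈ K nonzero with 2_q := q + q⁻¹ ≠ 0, ℏ ∈ K, and let A be a unital associative K-algebra containing elements b,h,c satisfying the SL(R_q,ℏ) relations. Then the element Cas_sl = q⁻¹bc + h²/2_q + q·cb commutes with each of b, h, c. -/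
/-- In any unital associative algebra whose elements `b,h,c` satisfy the relations of
`SL(R_q,ℏ)` (standard `SL(2)` case), the reduced q-Casimir
`Cas_sl = q⁻¹bc + h²/2_q + q·cb` commutes with each of `b,h,c`. -/
theorem stmt_5 (K : Type*) [Field K] (A : Type*) [Ring A] [Algebra K A]
    (q ℏ : K) (hq : q ≠ 0) (h2q : q + q⁻¹ ≠ 0) (b h c : A)
    (r1 : q ^ 2 • (h * b) - b * h = ((q + q⁻¹) * ℏ) • b)
    (r2 : q ^ 2 • (c * h) - h * c = ((q + q⁻¹) * ℏ) • c)
    (r3 : ((q + q⁻¹) * q) • (b * c - c * b) + (q ^ 2 - 1) • (h * h) =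
      ((q + q⁻¹) * ℏ) • h) :
    (∀ x ∈ ({b, h, c} : Set A),
      (q⁻¹ • (b * c) + (q + q⁻¹)⁻¹ • (h * h) + q • (c * b)) * x =
        x * (q⁻¹ • (b * c) + (q + q⁻¹)⁻¹ • (h * h) + q • (c * b))) := by
  have L : ∀ {x y : A} (z : A), x = y → z * x = z * y := fun z e => by rw [e]
  have R : ∀ {x y : A} (z : A), x = y → x * z = y * z := fun z e => by rw [e]
  generalize ht : q + q⁻¹ = t at *
  have hb1 := L b r3
  have hb2 := R b r3
  have hb3 := L h r1
  have hb4 := R h r1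
  have hc1 := L c r3
  have hc2 := R c r3
  have hc3 := L h r2
  have hc4 := R h r2
  have hh1 := L b r2
  have hh2 := R c r1
  have hh3 := R b r2
  have hh4 := L c r1
  simp only [mul_add, add_mul, mul_sub, sub_mul, smul_mul_assoc, mul_smul_comm, mul_assoc,
    smul_add, smul_sub] at hb1 hb2 hb3 hb4 hc1 hc2 hc3 hc4 hh1 hh2 hh3 hh4
  rintro x (rfl | rfl | rfl) <;>
  simp only [mul_add, add_mul, smul_mul_assoc, mul_smul_comm, mul_assoc]
  · linear_combination (norm := skip) (-(q⁻¹ * t⁻¹ * q⁻¹)) • hb1 - t⁻¹ • hb2 + t⁻¹ • hb3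
      + (t⁻¹ * q⁻¹ * q⁻¹) • hb4
    match_scalars <;> field_simp <;> ring
  · linear_combination (norm := skip) (q⁻¹ * q⁻¹ * q⁻¹) • (hh1 - hh2) + q • (hh3 - hh4)
    match_scalars <;> field_simp <;> ring
  · linear_combination (norm := skip) (q⁻¹ * t⁻¹ * q⁻¹) • hc2 + t⁻¹ • hc1 - t⁻¹ • hc4
      - (t⁻¹ * q⁻¹ * q⁻¹) • hc3
    match_scalars <;> field_simp <;> ring
end

section
/- Let K be a field, q ∈ K nonzero with 2_q := q + q⁻¹ ≠ 0, ℏ ∈ K, and let A be a unital associative K-algebra containing elements b,h,c satisfying the SL(R_q,ℏ) relations. Then the 2×2 matrix F = [[q·h/2_q, b],[c, −q⁻¹·h/2_q]] with entries in A satisfies the Cayley–Hamilton identity F² − q⁻¹ℏ·F − (Cas_sl/2_q)·I = 0, where Cas_sl = q⁻¹bc + h²/2_q + q·cb and I is the 2×2 identity matrix. -/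
/-- Cayley–Hamilton identity for the sl-reduced matrix `F` of generators of the
modified reflection equation algebra: `F² − q⁻¹ℏ·F − (Cas_sl/2_q)·I = 0`. -/
theorem stmt_6 (K : Type*) [Field K] (A : Type*) [Ring A] [Algebra K A]
    (q ℏ : K) (hq : q ≠ 0) (h2q : q + q⁻¹ ≠ 0) (b h c : A)
    (r1 : q ^ 2 • (h * b) - b * h = ((q + q⁻¹) * ℏ) • b)
    (r2 : q ^ 2 • (c * h) - h * c = ((q + q⁻¹) * ℏ) • c)
    (r3 : ((q + q⁻¹) * q) • (b * c - c * b) + (q ^ 2 - 1) • (h * h) =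
      ((q + q⁻¹) * ℏ) • h)
    (F : Matrix (Fin 2) (Fin 2) A)
    (hF : F = !![(q / (q + q⁻¹)) • h, b; c, -((q⁻¹ / (q + q⁻¹)) • h)])
    (Cas : A)
    (hCas : Cas = q⁻¹ • (b * c) + (q + q⁻¹)⁻¹ • (h * h) + q • (c * b)) :
    F * F - (q⁻¹ * ℏ) • F - ((q + q⁻¹)⁻¹ • Cas) • (1 : Matrix (Fin 2) (Fin 2) A) = 0 := by
  have e : q ^ 2 + 1 ≠ 0 := by
    intro h0
    apply h2q
    field_simp
    simpa using h0
  have ht : q + q⁻¹ = (q ^ 2 + 1) / q := by field_simp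
  subst hF hCas
  rw [ht] at *
  ext i j
  fin_cases i <;> fin_cases j <;>
    simp [Matrix.mul_apply, Fin.sum_univ_two]
  · linear_combination (norm := skip) (((q ^ 2 + 1) / q)⁻¹ ^ 2) • r3
    match_scalars <;> field_simp <;> ring
  · linear_combination (norm := skip) (q⁻¹ * ((q ^ 2 + 1) / q)⁻¹) • r1
    match_scalars <;> field_simp <;> ring
  · linear_combination (norm := skip) (q⁻¹ * ((q ^ 2 + 1) / q)⁻¹) • r2
    match_scalars <;> field_simp <;> ring
  · linear_combination (norm := skip) (-(q⁻¹ * ((q ^ 2 + 1) / q)⁻¹) ^ 2) • r3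
    match_scalars <;> field_simp <;> ring
end

section
/- Let K be a field, q ∈ K nonzero with 2_q := q + q⁻¹ ≠ 0, ℏ ∈ K, and let A be a unital associative K-algebra containing elements b,h,c satisfying the SL(R_q,ℏ) relations and additionally q⁻¹bc + h²/2_q + q·cb = C·1 for a scalar C ∈ K. Let μ₀ ≠ μ₁ ∈ K be the two roots of μ² − q⁻¹ℏμ − C/2_q = 0 (i.e. μ₀ + μ₁ = q⁻¹ℏ and μ₀μ₁ = −C/2_q). Set F = [[q·h/2_q, b],[c, −q⁻¹·h/2_q]] and e_i = (μ_i − μ_j)⁻¹·(F − μ_j·I) for {i,j} = {0,1}. Then e₀² = e₀, e₁² = e₁, e₀e₁ = e₁e₀ = 0, and e₀ + e₁ = I. -/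
/-- On the quantum hyperboloid (the quotient of `SL(R_q,ℏ)` by the value `C` of the
q-Casimir element), the Cayley–Hamilton identity for the matrix `F` of generators
produces a pair of complementary orthogonal idempotents. -/
theorem stmt_7 (K : Type*) [Field K] (A : Type*) [Ring A] [Algebra K A]
    (q ℏ : K) (hq : q ≠ 0) (h2q : q + q⁻¹ ≠ 0) (b h c : A)
    (r1 : q ^ 2 • (h * b) - b * h = ((q + q⁻¹) * ℏ) • b)
    (r2 : q ^ 2 • (c * h) - h * c = ((q + q⁻¹) * ℏ) • c)
    (r3 : ((q + q⁻¹) * q) • (b * c - c * b) + (q ^ 2 - 1) • (h * h) =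
      ((q + q⁻¹) * ℏ) • h)
    (C : K)
    (hC : q⁻¹ • (b * c) + (q + q⁻¹)⁻¹ • (h * h) + q • (c * b) = algebraMap K A C)
    (μ₀ μ₁ : K) (hμ : μ₀ ≠ μ₁)
    (hsum : μ₀ + μ₁ = q⁻¹ * ℏ) (hprod : μ₀ * μ₁ = -(C / (q + q⁻¹)))
    (F : Matrix (Fin 2) (Fin 2) A)
    (hF : F = !![(q / (q + q⁻¹)) • h, b; c, -((q⁻¹ / (q + q⁻¹)) • h)])
    (e₀ e₁ : Matrix (Fin 2) (Fin 2) A)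
    (he₀ : e₀ = (μ₀ - μ₁)⁻¹ • (F - μ₁ • (1 : Matrix (Fin 2) (Fin 2) A)))
    (he₁ : e₁ = (μ₁ - μ₀)⁻¹ • (F - μ₀ • (1 : Matrix (Fin 2) (Fin 2) A))) :
    e₀ * e₀ = e₀ ∧ e₁ * e₁ = e₁ ∧ e₀ * e₁ = 0 ∧ e₁ * e₀ = 0 ∧ e₀ + e₁ = 1 := by
  have hq2 : q ^ 2 + 1 ≠ 0 := by
    intro h0
    apply h2q
    field_simp
    simpa using h0
  have hd : μ₀ - μ₁ ≠ 0 := sub_ne_zero.mpr hμ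
  have hd' : μ₁ - μ₀ ≠ 0 := sub_ne_zero.mpr hμ.symm
  rw [Algebra.algebraMap_eq_smul_one] at hC
  have key : F * F = (μ₀ + μ₁) • F - (μ₀ * μ₁) • (1 : Matrix (Fin 2) (Fin 2) A) := by
    rw [hsum, hprod, hF]
    ext i j
    fin_cases i <;> fin_cases j <;>
      simp [Matrix.mul_apply, Fin.sum_univ_two, smul_smul]
    · linear_combination (norm := skip) ((q + q⁻¹)⁻¹ ^ 2) • r3 + (q + q⁻¹)⁻¹ • hC
      match_scalars <;> field_simp <;> ring
    · linear_combination (norm := skip) (q⁻¹ * (q + q⁻¹)⁻¹) • r1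
      match_scalars <;> field_simp <;> ring
    · linear_combination (norm := skip) (q⁻¹ * (q + q⁻¹)⁻¹) • r2
      match_scalars <;> field_simp <;> ring
    · linear_combination (norm := skip) (-(q⁻¹ ^ 2 * (q + q⁻¹)⁻¹ ^ 2)) • r3 + (q + q⁻¹)⁻¹ • hC
      match_scalars <;> field_simp <;> ring
  clear hF
  have gen : ∀ x y : K, (F - x • (1 : Matrix (Fin 2) (Fin 2) A)) * (F - y • 1) =
      (μ₀ + μ₁ - x - y) • F + (x * y - μ₀ * μ₁) • 1 := by
    intro x y
    simp only [sub_mul, mul_sub, smul_mul_assoc, mul_smul_comm, one_mul, mul_one, key]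
    module
  subst he₀ he₁
  simp only [smul_mul_assoc, mul_smul_comm, gen]
  refine ⟨?_, ?_, ?_, ?_, ?_⟩ <;> match_scalars <;> field_simp <;> ring
end

section
/- Let K be a field and q ∈ K nonzero with 2_q := q + q⁻¹ ≠ 0. Let A be a unital associative K-algebra containing elements X₀, X₊, X₋ and a central invertible element C satisfying: q²X₀X₊ − X₊X₀ = qCX₊; q⁻²X₀X₋ − X₋X₀ = −q⁻¹CX₋; X₊X₋ − X₋X₊ + (q² − q⁻²)X₀² = (q + q⁻¹)CX₀. Then the elements h = 2_q·q⁻¹C⁻¹X₀, b = q⁻¹C⁻¹X₊, c = q⁻¹C⁻¹X₋ satisfy the SL(R_q,ℏ) relations with ℏ = 1: q²hb − bh = 2_q·b; q²ch − hc = 2_q·c; 2_q·q(bc − cb) + (q²−1)h² = 2_q·h. -/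
/-- The Lyubashenko–Sudbery quantum Lie algebra relations imply, after rescaling by
the central invertible element `C`, the `SL(R_q,1)` relations. Here `X0, Xp, Xm`
stand for `X₀, X₊, X₋`. -/
theorem stmt_9 (K : Type*) [Field K] (q : K) (hq : q ≠ 0) (h2q : q + q⁻¹ ≠ 0)
    (A : Type*) [Ring A] [Algebra K A]
    (X0 Xp Xm C Cinv : A)
    (hCentral : ∀ x : A, C * x = x * C)
    (hCinv : C * Cinv = 1) (hCinv' : Cinv * C = 1)
    (r1 : q ^ 2 • (X0 * Xp) - Xp * X0 = q • (C * Xp))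
    (r2 : (q ^ 2)⁻¹ • (X0 * Xm) - Xm * X0 = -(q⁻¹ • (C * Xm)))
    (r3 : Xp * Xm - Xm * Xp + (q ^ 2 - (q ^ 2)⁻¹) • (X0 * X0) = (q + q⁻¹) • (C * X0))
    (h b c : A)
    (hh : h = ((q + q⁻¹) * q⁻¹) • (Cinv * X0))
    (hb : b = q⁻¹ • (Cinv * Xp))
    (hc : c = q⁻¹ • (Cinv * Xm)) :
    q ^ 2 • (h * b) - b * h = (q + q⁻¹) • b ∧
    q ^ 2 • (c * h) - h * c = (q + q⁻¹) • c ∧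
    ((q + q⁻¹) * q) • (b * c - c * b) + (q ^ 2 - 1) • (h * h) = (q + q⁻¹) • h := by
  have hcomm : ∀ x : A, x * Cinv = Cinv * x := fun x => by
    calc x * Cinv = Cinv * C * (x * Cinv) := by rw [hCinv', one_mul]
      _ = Cinv * (C * x) * Cinv := by simp only [mul_assoc]
      _ = Cinv * x * (C * Cinv) := by rw [hCentral x]; simp only [mul_assoc]
      _ = Cinv * x := by rw [hCinv, mul_one]
  have hprod : ∀ x y : A, (Cinv * x) * (Cinv * y) = Cinv * Cinv * (x * y) := fun x y => by
    calc (Cinv * x) * (Cinv * y) = Cinv * (x * Cinv) * y := by simp only [mul_assoc]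
      _ = _ := by rw [hcomm]; simp only [mul_assoc]
  have hred : ∀ x : A, Cinv * Cinv * (C * x) = Cinv * x := fun x => by
    calc Cinv * Cinv * (C * x) = Cinv * (Cinv * C) * x := by simp only [mul_assoc]
      _ = _ := by rw [hCinv', mul_one]
  have s1 := congrArg (fun z => Cinv * Cinv * z) r1
  have s2 := congrArg (fun z => Cinv * Cinv * z) r2
  have s3 := congrArg (fun z => Cinv * Cinv * z) r3
  simp only [mul_sub, mul_add, mul_neg, mul_smul_comm, hred] at s1 s2 s3
  subst hh hb hc
  simp only [smul_mul_assoc, mul_smul_comm, hprod]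
  refine ⟨?_, ?_, ?_⟩
  · rw [sub_eq_iff_eq_add, ← sub_eq_iff_eq_add'] at s1
    rw [← s1]
    match_scalars <;> field_simp <;> ring
  · rw [sub_eq_iff_eq_add, ← sub_eq_iff_eq_add'] at s2
    rw [← s2]
    match_scalars <;> field_simp <;> ring
  · rw [← eq_sub_iff_add_eq, sub_eq_iff_eq_add] at s3
    rw [s3]
    match_scalars <;> field_simp <;> ring
end

section
/- Let K be a field, q ∈ K nonzero, and let A be a unital associative K-algebra containing elements a,b,c,d satisfying the quantum SL(2) function algebra relations: ab = qba, ac = qca, bd = qdb, bc = cb, cd = qdc, ad − da = (q − q⁻¹)bc, ad − qbc = 1. Then the 2×2 matrices over A given by e₋₁ = [[ad, −q⁻¹ab],[cd, −q⁻¹cb]] and e₁ = [[da, −qdc],[ba, −qbc]] are idempotent: e₋₁² = e₋₁ and e₁² = e₁. -/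
theorem idem_aux {A : Type*} [Ring A] (x y z w : A) (h : z * x + w * y = 1) :
    !![x * z, x * w; y * z, y * w] * !![x * z, x * w; y * z, y * w]
      = !![x * z, x * w; y * z, y * w] := by
  have key : ∀ s t : A, s * z * (x * t) + s * w * (y * t) = s * t := by
    intro s t
    have : s * z * (x * t) + s * w * (y * t) = s * (z * x + w * y) * t := by noncomm_ring
    rw [this, h, mul_one]
  rw [Matrix.mul_fin_two]
  simp only [key]

/-- Over any algebra whose elements `a,b,c,d` satisfy the quantum `SL(2)` function
algebra relations, the 2×2 matrices `e₋₁` and `e₁` (defining quantum line bundles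
over the quantum sphere) are idempotent. -/
theorem stmt_10 (K : Type*) [Field K] (q : K) (hq : q ≠ 0)
    (A : Type*) [Ring A] [Algebra K A] (a b c d : A)
    (r1 : a * b = q • (b * a))
    (r2 : a * c = q • (c * a))
    (r3 : b * d = q • (d * b))
    (r4 : b * c = c * b)
    (r5 : c * d = q • (d * c))
    (r6 : a * d - d * a = (q - q⁻¹) • (b * c))
    (r7 : a * d - q • (b * c) = 1)
    (em1 e1 : Matrix (Fin 2) (Fin 2) A)
    (hem1 : em1 = !![a * d, -(q⁻¹ • (a * b)); c * d, -(q⁻¹ • (c * b))])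
    (he1 : e1 = !![d * a, -(q • (d * c)); b * a, -(q • (b * c))]) :
    em1 * em1 = em1 ∧ e1 * e1 = e1 := by
  have h1 : a * d = 1 + q • (b * c) := by rw [← r7]; abel
  have h2 : d * a = 1 + q⁻¹ • (b * c) := by
    have : d * a = a * d - (q - q⁻¹) • (b * c) := by rw [← r6]; abel
    rw [this, h1, sub_smul]; abel
  constructor
  · have := idem_aux a c d (-(q⁻¹ • b)) (by
      rw [h2, neg_mul, smul_mul_assoc]; abel)
    simpa only [hem1, mul_neg, mul_smul_comm] using this
  · have := idem_aux d b a (-(q • c)) (by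
      rw [h1, neg_mul, smul_mul_assoc, r4]; abel)
    simpa only [he1, mul_neg, mul_smul_comm] using this
end

section
/- Let α, β ∈ ℝ. On the polynomial algebra ℝ[x,h,y], define the bracket {f,g} = p(x,h)·(∂_h f·∂_x g − ∂_x f·∂_h g) + r(y,h)·(∂_h f·∂_y g − ∂_y f·∂_h g) + s(h)·(∂_x f·∂_y g − ∂_y f·∂_x g), where p = 2αx + 2βhx, r = −2αy − 2βhy, s = αh + βh². Then this bracket satisfies the Jacobi identity: {f,{g,k}} + {g,{k,f}} + {k,{f,g}} = 0 for all f, g, k ∈ ℝ[x,h,y]; i.e. it is a Poisson bracket on sl(2)*. -/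
open MvPolynomial

theorem pderiv_comm_aux (i j : Fin 3) (f : MvPolynomial (Fin 3) ℝ) :
    pderiv i (pderiv j f) = pderiv j (pderiv i f) := by
  have h : ⁅(pderiv i : Derivation ℝ (MvPolynomial (Fin 3) ℝ) (MvPolynomial (Fin 3) ℝ)),
      (pderiv j : Derivation ℝ (MvPolynomial (Fin 3) ℝ) (MvPolynomial (Fin 3) ℝ))⁆ = 0 := by
    apply MvPolynomial.derivation_ext
    intro k
    simp only [Derivation.commutator_apply, pderiv_X, Derivation.zero_apply, Pi.single_apply]
    split_ifs <;> simp
  have h2 := congrArg (fun D => D f) h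
  simp only [Derivation.commutator_apply, Derivation.zero_apply] at h2
  exact sub_eq_zero.mp h2

/-- The Poisson pencil `α{,}_KKS + β{,}_REA` on `sl(2)*` (with coordinates
`x = X 0`, `h = X 1`, `y = X 2`) satisfies the Jacobi identity. -/
theorem stmt_11 (α β : ℝ)
    (x h y : MvPolynomial (Fin 3) ℝ)
    (hx : x = X 0) (hh : h = X 1) (hy : y = X 2)
    (p r s : MvPolynomial (Fin 3) ℝ)
    (hp : p = C (2 * α) * x + C (2 * β) * h * x)
    (hr : r = -(C (2 * α) * y) - C (2 * β) * h * y)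
    (hs : s = C α * h + C β * h ^ 2)
    (br : MvPolynomial (Fin 3) ℝ → MvPolynomial (Fin 3) ℝ → MvPolynomial (Fin 3) ℝ)
    (hbr : ∀ f g, br f g =
      p * (pderiv 1 f * pderiv 0 g - pderiv 0 f * pderiv 1 g) +
      r * (pderiv 1 f * pderiv 2 g - pderiv 2 f * pderiv 1 g) +
      s * (pderiv 0 f * pderiv 2 g - pderiv 2 f * pderiv 0 g)) :
    ∀ f g k : MvPolynomial (Fin 3) ℝ,
      br f (br g k) + br g (br k f) + br k (br f g) = 0 := by
  intro f g k
  have d0p : pderiv 0 p = C (2 * α) + C (2 * β) * h := by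
    subst hp hx hh; simp [Derivation.leibniz, pderiv_X]
  have d1p : pderiv 1 p = C (2 * β) * x := by
    subst hp hx hh; simp [Derivation.leibniz, pderiv_X]; try ring
  have d2p : pderiv 2 p = 0 := by
    subst hp hx hh; simp [Derivation.leibniz, pderiv_X]
  have d0r : pderiv 0 r = 0 := by
    subst hr hy hh; simp [Derivation.leibniz, pderiv_X]
  have d1r : pderiv 1 r = - (C (2 * β) * y) := by
    subst hr hy hh; simp [Derivation.leibniz, pderiv_X]; try ring
  have d2r : pderiv 2 r = - C (2 * α) - C (2 * β) * h := by
    subst hr hy hh; simp [Derivation.leibniz, pderiv_X]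
  have d0s : pderiv 0 s = 0 := by
    subst hs hh; simp [Derivation.leibniz, pderiv_X, pow_two]
  have d2s : pderiv 2 s = 0 := by
    subst hs hh; simp [Derivation.leibniz, pderiv_X, pow_two]
  have e : y * p + x * r = 0 := by rw [hp, hr]; ring
  simp only [hbr, map_add, map_sub, Derivation.leibniz, smul_eq_mul, d0p, d1p, d2p, d0r, d1r,
    d2r, d0s, d2s, pderiv_comm_aux 1 0, pderiv_comm_aux 2 0, pderiv_comm_aux 2 1]
  generalize pderiv 1 s = s1
  linear_combination (-(C (2 * β)) *
    (pderiv 1 f * (pderiv 0 g * pderiv 2 k - pderiv 2 g * pderiv 0 k)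
      - pderiv 0 f * (pderiv 1 g * pderiv 2 k - pderiv 2 g * pderiv 1 k)
      + pderiv 2 f * (pderiv 1 g * pderiv 0 k - pderiv 0 g * pderiv 1 k))) * e
end

section
/- Let K be a field, q ∈ K nonzero with 2_q := q + q⁻¹ ≠ 0, and w ∈ K. The 3×3 matrices B = w·[[0,−1,0],[0,0,q/2_q],[0,0,0]], H = w·diag(q², q²−1, −1), C = w·[[0,0,0],[−q/2_q,0,0],[0,q²,0]] satisfy the SL(R_q,ℏ) relations with ℏ = w(q⁴−q²+1)/2_q: q²HB − BH = 2_qℏ·B; q²CH − HC = 2_qℏ·C; 2_q·q(BC − CB) + (q²−1)H² = 2_qℏ·H. -/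
/-- The matrices of the q-adjoint operators `B_q = ad b`, `H_q = ad h`, `C_q = ad c`
of the braided Lie algebra `sl(2)_q` satisfy the `SL(R_q,ℏ)` relations with
`ℏ = w(q⁴ − q² + 1)/2_q`. -/
theorem stmt_12 (K : Type*) [Field K] (q : K) (hq : q ≠ 0) (h2q : q + q⁻¹ ≠ 0)
    (w : K) (ℏ : K) (hℏ : ℏ = w * (q ^ 4 - q ^ 2 + 1) / (q + q⁻¹))
    (B H C : Matrix (Fin 3) (Fin 3) K)
    (hB : B = w • !![0, -1, 0; 0, 0, q / (q + q⁻¹); 0, 0, 0])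
    (hH : H = w • !![q ^ 2, 0, 0; 0, q ^ 2 - 1, 0; 0, 0, -1])
    (hC : C = w • !![0, 0, 0; -(q / (q + q⁻¹)), 0, 0; 0, q ^ 2, 0]) :
    q ^ 2 • (H * B) - B * H = ((q + q⁻¹) * ℏ) • B ∧
    q ^ 2 • (C * H) - H * C = ((q + q⁻¹) * ℏ) • C ∧
    ((q + q⁻¹) * q) • (B * C - C * B) + (q ^ 2 - 1) • (H * H) = ((q + q⁻¹) * ℏ) • H := by
  have hs : (q + q⁻¹) * ℏ = w * (q ^ 4 - q ^ 2 + 1) := by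
    rw [hℏ]; exact mul_div_cancel₀ _ h2q
  have hx : (q + q⁻¹) * (q / (q + q⁻¹)) = q := mul_div_cancel₀ _ h2q
  rw [hs]
  generalize q / (q + q⁻¹) = x at *
  generalize q + q⁻¹ = s at *
  subst hB hH hC
  refine ⟨?_, ?_, ?_⟩
  · ext i j
    fin_cases i <;> fin_cases j <;> simp [Matrix.mul_apply, Fin.sum_univ_three] <;> ring
  · ext i j
    fin_cases i <;> fin_cases j <;> simp [Matrix.mul_apply, Fin.sum_univ_three] <;> ring
  · ext i j
    fin_cases i <;> fin_cases j <;> simp [Matrix.mul_apply, Fin.sum_univ_three]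
    · linear_combination (w ^ 2 * q) * hx
    · linear_combination (w ^ 2 * q * (q ^ 2 - 1)) * hx
    · linear_combination (-(w ^ 2 * q * q ^ 2)) * hx
end

section
/- Let K be a field, q ∈ K nonzero with 2_q := q + q⁻¹ ≠ 0, w ∈ K, and let A be a unital associative K-algebra containing elements b,h,c satisfying the SL(R_q,0) relations: q²hb − bh = 0; q²ch − hc = 0; 2_q·q(bc − cb) + (q²−1)h² = 0. Define the bracket [·,·] on the set {b,h,c} with values in A by the table [b,b]=0, [b,h]=−wb, [b,c]=w(q/2_q)h, [h,b]=wq²b, [h,h]=w(q²−1)h, [h,c]=−wc, [c,b]=−w(q/2_q)h, [c,h]=wq²c, [c,c]=0. Then for each x ∈ {b,h,c}: q⁻¹·b·[c,x] + (1/2_q)·h·[h,x] + q·c·[b,x] = 0 in A. -/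
/-- In the q-commutative algebra `K_q[ℝ³] = SL(R_q,0)` the braided Lie bracket of
`sl(2)_q` (encoded by the function `br` on the indices `0 ↦ b`, `1 ↦ h`, `2 ↦ c`)
satisfies, for each generator `x ∈ {b,h,c}`, the relation
`q⁻¹·b·[c,x] + (1/2_q)·h·[h,x] + q·c·[b,x] = 0`. -/
theorem stmt_13 (K : Type*) [Field K] (q : K) (hq : q ≠ 0) (h2q : q + q⁻¹ ≠ 0)
    (w : K) (A : Type*) [Ring A] [Algebra K A] (b h c : A)
    (r1 : q ^ 2 • (h * b) - b * h = 0)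
    (r2 : q ^ 2 • (c * h) - h * c = 0)
    (r3 : ((q + q⁻¹) * q) • (b * c - c * b) + (q ^ 2 - 1) • (h * h) = 0)
    (br : Fin 3 → Fin 3 → A)
    (hbb : br 0 0 = 0)
    (hbh : br 0 1 = -(w • b))
    (hbc : br 0 2 = (w * (q / (q + q⁻¹))) • h)
    (hhb : br 1 0 = (w * q ^ 2) • b)
    (hhh : br 1 1 = (w * (q ^ 2 - 1)) • h)
    (hhc : br 1 2 = -(w • c))
    (hcb : br 2 0 = -((w * (q / (q + q⁻¹))) • h))
    (hch : br 2 1 = (w * q ^ 2) • c)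
    (hcc : br 2 2 = 0) :
    ∀ j : Fin 3,
      q⁻¹ • (b * br 2 j) + (q + q⁻¹)⁻¹ • (h * br 1 j) + q • (c * br 0 j) = 0 := by
  generalize q + q⁻¹ = s at *
  intro j
  fin_cases j
  · have e := congrArg (fun x => (w * s⁻¹) • x) r1
    simp only [smul_zero] at e
    simp only [Fin.zero_eta, hcb, hhb, hbb, mul_neg, mul_smul_comm, mul_zero]
    refine Eq.trans ?_ e
    match_scalars <;> field_simp
  · have e := congrArg (fun x => (w * s⁻¹) • x) r3
    simp only [smul_zero] at e
    simp only [Fin.mk_one, hch, hhh, hbh, mul_neg, mul_smul_comm, mul_zero]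
    refine Eq.trans ?_ e
    match_scalars <;> field_simp
  · have e := congrArg (fun x => (w * s⁻¹) • x) r2
    simp only [smul_zero] at e
    simp only [Fin.reduceFinMk, hcc, hhc, hbc, mul_neg, mul_smul_comm, mul_zero]
    refine Eq.trans ?_ e
    match_scalars <;> field_simp
end

section
/- Let K be a field, q ∈ K nonzero with 2_q := q + q⁻¹ ≠ 0, ε ∈ K, and let A be a unital associative K-algebra containing elements D_ℓ, D_b, D_h, D_c such that D_ℓ commutes with D_b, D_h, D_c and the relations hold: q²D_hD_b − D_bD_h = 0; q²D_cD_h − D_hD_c = 0; 2_q·q(D_bD_c − D_cD_b) + (q²−1)D_h² = 0. Then the 4×4 matrix over A, Dir = [[qD_h/2_q, D_b, εD_ℓ, 0],[D_c, −q⁻¹D_h/2_q, 0, εD_ℓ],[εD_ℓ, 0, −qD_h/2_q, −D_b],[0, εD_ℓ, −D_c, q⁻¹D_h/2_q]], satisfies Dir² = (ε²D_ℓ² + (1/2_q)(q⁻¹D_bD_c + D_h²/2_q + qD_cD_b))·I₄, where I₄ is the 4×4 identity matrix. -/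
/-- The square of the q-Dirac operator on the q-Minkowski space algebra equals the
q-Laplace operator times the identity matrix. -/
theorem stmt_14 (K : Type*) [Field K] (q ε : K) (hq : q ≠ 0) (h2q : q + q⁻¹ ≠ 0)
    (A : Type*) [Ring A] [Algebra K A]
    (Dl Db Dh Dc : A)
    (c1 : Dl * Db = Db * Dl) (c2 : Dl * Dh = Dh * Dl) (c3 : Dl * Dc = Dc * Dl)
    (r1 : q ^ 2 • (Dh * Db) - Db * Dh = 0)
    (r2 : q ^ 2 • (Dc * Dh) - Dh * Dc = 0)
    (r3 : ((q + q⁻¹) * q) • (Db * Dc - Dc * Db) + (q ^ 2 - 1) • (Dh * Dh) = 0)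
    (Dir : Matrix (Fin 4) (Fin 4) A)
    (hDir : Dir = !![(q / (q + q⁻¹)) • Dh, Db, ε • Dl, 0;
                     Dc, -((q⁻¹ / (q + q⁻¹)) • Dh), 0, ε • Dl;
                     ε • Dl, 0, -((q / (q + q⁻¹)) • Dh), -Db;
                     0, ε • Dl, -Dc, (q⁻¹ / (q + q⁻¹)) • Dh]) :
    Dir * Dir =
      (ε ^ 2 • (Dl * Dl) +
        (q + q⁻¹)⁻¹ • (q⁻¹ • (Db * Dc) + (q + q⁻¹)⁻¹ • (Dh * Dh) + q • (Dc * Db))) •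
      (1 : Matrix (Fin 4) (Fin 4) A) := by
  have e1 : Db * Dh = q ^ 2 • (Dh * Db) := (sub_eq_zero.mp r1).symm
  have e2 : Dh * Dc = q ^ 2 • (Dc * Dh) := (sub_eq_zero.mp r2).symm
  obtain ⟨s, hs⟩ : ∃ s, s = q + q⁻¹ := ⟨_, rfl⟩
  have hsq : s * q = q ^ 2 + 1 := by rw [hs]; field_simp
  rw [← hs] at h2q r3 hDir ⊢
  have e3 : Db * Dc = Dc * Db - ((q ^ 2 - 1) / (s * q)) • (Dh * Dh) := by
    have h : s * q ≠ 0 := mul_ne_zero h2q hq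
    have h1 : (s * q)⁻¹ • ((s * q) • (Db * Dc - Dc * Db) + (q ^ 2 - 1) • (Dh * Dh)) = 0 := by
      rw [r3, smul_zero]
    rw [smul_add, smul_smul, smul_smul, inv_mul_cancel₀ h, one_smul] at h1
    rw [div_eq_inv_mul, eq_sub_iff_add_eq, ← sub_eq_zero, ← h1]
    abel
  subst hDir
  ext i j
  fin_cases i <;> fin_cases j <;>
    simp [Matrix.mul_apply, Fin.sum_univ_four, Matrix.smul_apply, Matrix.one_apply,
      c1, c2, c3, e1, e2, e3] <;>
    match_scalars <;> field_simp <;> 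
    first | done | ring1 | linear_combination hsq | linear_combination -hsq |
      linear_combination (1 - q ^ 2) * hsq
end

section
/- Let K be a field, q, ε ∈ K nonzero with 2_q := q + q⁻¹ ≠ 0. Let 𝓛 be the 4-dimensional K-vector space with basis ℓ, h, b, c, and let ⟨·,·⟩ : 𝓛 × 𝓛 → K be the bilinear form with ⟨b,c⟩ = q⁻¹, ⟨h,h⟩ = 2_q, ⟨c,b⟩ = q, ⟨ℓ,ℓ⟩ = ε⁻¹ and all other pairs of basis vectors pairing to 0. Extend it to 𝓛⊗𝓛 by ⟨x₁⊗x₂, y₁⊗y₂⟩₂ = ⟨x₂,y₁⟩·⟨x₁,y₂⟩. Let Ĩ₋ ⊂ 𝓛⊗𝓛 be the span of q²h⊗b − b⊗h, q²c⊗h − h⊗c, 2_q·q(b⊗c − c⊗b) + (q²−1)h⊗h, ℓ⊗b − b⊗ℓ, ℓ⊗h − h⊗ℓ, ℓ⊗c − c⊗ℓ, and let Ĩ₊ ⊂ 𝓛⊗𝓛 be the span of q⁻¹b⊗c + (1/2_q)h⊗h + q·c⊗b, b⊗b, q²b⊗h + h⊗b, q³b⊗c − q·h⊗h + q⁻¹c⊗b,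 q²h⊗c + c⊗h, c⊗c, ℓ⊗b + b⊗ℓ, ℓ⊗h + h⊗ℓ, ℓ⊗c + c⊗ℓ, ℓ⊗ℓ. Then Ĩ₋ and Ĩ₊ are orthogonal to each other with respect to ⟨·,·⟩₂: ⟨u,v⟩₂ = 0 and ⟨v,u⟩₂ = 0 for all u ∈ Ĩ₋, v ∈ Ĩ₊. -/
noncomputable section

/-- The standard basis vectors `ℓ = e 0`, `h = e 1`, `b = e 2`, `c = e 3` of the
4-dimensional space `𝓛 = (Fin 4 → K)`. -/
def genVec (K : Type*) [Field K] (i : Fin 4) : Fin 4 → K := Pi.single i 1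

/-- The tensor product of two vectors of `𝓛`, realized in the canonical model
`𝓛 ⊗ 𝓛 ≅ (Fin 4 × Fin 4 → K)`, where `(u ⊗ v) (i, j) = u i * v j`. -/
def tens {K : Type*} [Field K] (u v : Fin 4 → K) : Fin 4 × Fin 4 → K :=
  fun p => u p.1 * v p.2

/-- The Gram matrix of the `U_q(sl(2))`-invariant pairing on `𝓛` in the basis
`ℓ, h, b, c`: `⟨ℓ,ℓ⟩ = ε⁻¹`, `⟨h,h⟩ = q + q⁻¹`, `⟨b,c⟩ = q⁻¹`, `⟨c,b⟩ = q`,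
all other pairs of basis vectors pairing to `0`. -/
def gram (K : Type*) [Field K] (q ε : K) : Matrix (Fin 4) (Fin 4) K :=
  !![ε⁻¹, 0, 0, 0;
     0, q + q⁻¹, 0, 0;
     0, 0, 0, q⁻¹;
     0, 0, q, 0]

/-- The extension of the pairing to `𝓛 ⊗ 𝓛` coupling the inner factors first:
on pure tensors `⟨x₁⊗x₂, y₁⊗y₂⟩₂ = ⟨x₂,y₁⟩·⟨x₁,y₂⟩`. -/
def pairing2 {K : Type*} [Field K] (q ε : K)
    (U V : Fin 4 × Fin 4 → K) : K :=
  ∑ i : Fin 4, ∑ j : Fin 4, ∑ k : Fin 4, ∑ l : Fin 4,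
    U (i, j) * V (k, l) * gram K q ε j k * gram K q ε i l

theorem pairing2_eq {K : Type*} [Field K] (q ε : K) (U V : Fin 4 × Fin 4 → K) :
    pairing2 q ε U V = ∑ i : Fin 4, ∑ j : Fin 4, U (i, j) *
      (![ε⁻¹, q + q⁻¹, q⁻¹, q] i * ![ε⁻¹, q + q⁻¹, q⁻¹, q] j *
        V (![0, 1, 3, 2] j, ![0, 1, 3, 2] i)) := by
  unfold pairing2
  refine Finset.sum_congr rfl fun i _ => Finset.sum_congr rfl fun j _ => ?_
  fin_cases i <;> fin_cases j <;> simp [gram, Fin.sum_univ_four] <;> ring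

/-- bilinear version -/
def pairB {K : Type*} [Field K] (q ε : K) :
    (Fin 4 × Fin 4 → K) →ₗ[K] (Fin 4 × Fin 4 → K) →ₗ[K] K :=
  LinearMap.mk₂ K (pairing2 q ε)
    (by intro a b c; simp only [pairing2, Pi.add_apply, add_mul, Finset.sum_add_distrib])
    (by intro a b c; simp only [pairing2, Pi.smul_apply, smul_eq_mul, Finset.mul_sum, mul_assoc])
    (by intro a b c
        simp only [pairing2, Pi.add_apply, add_mul, mul_add, Finset.sum_add_distrib])
    (by intro a b c
        simp only [pairing2, Pi.smul_apply, smul_eq_mul, Finset.mul_sum, mul_assoc,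
          mul_left_comm a])

theorem pairing2_span {K : Type*} [Field K] (q ε : K) (S T : Set (Fin 4 × Fin 4 → K))
    (H : ∀ u ∈ S, ∀ v ∈ T, pairing2 q ε u v = 0) :
    ∀ u ∈ Submodule.span K S, ∀ v ∈ Submodule.span K T, pairing2 q ε u v = 0 := by
  intro u hu v hv
  change pairB q ε u v = 0
  induction hu using Submodule.span_induction with
  | zero => simp
  | add x y _ _ hx hy => simp [hx, hy]
  | smul a x _ hx => simp [hx]
  | mem x hx =>
    induction hv using Submodule.span_induction with
    | zero => simp
    | add x y _ _ hx hy => simp [hx, hy]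
    | smul a x _ hx => simp [hx]
    | mem y hy => exact H x hx y hy

set_option maxHeartbeats 4000000 in
/-- The subspaces `Ĩ₋` (defining relations of the q-Minkowski space algebra
`K_q[ℝ⁴]`) and `Ĩ₊` (the complementary symmetric subspace) are orthogonal to each
other with respect to the extended invariant pairing. -/
theorem stmt_17 (K : Type*) [Field K] (q ε : K) (hq : q ≠ 0) (hε : ε ≠ 0)
    (h2q : q + q⁻¹ ≠ 0)
    (ℓ h b c : Fin 4 → K)
    (hℓ : ℓ = genVec K 0) (hh : h = genVec K 1)
    (hb : b = genVec K 2) (hc : c = genVec K 3)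
    (Im Ip : Submodule K (Fin 4 × Fin 4 → K))
    (hIm : Im = Submodule.span K
      {q ^ 2 • tens h b - tens b h,
       q ^ 2 • tens c h - tens h c,
       ((q + q⁻¹) * q) • (tens b c - tens c b) + (q ^ 2 - 1) • tens h h,
       tens ℓ b - tens b ℓ,
       tens ℓ h - tens h ℓ,
       tens ℓ c - tens c ℓ})
    (hIp : Ip = Submodule.span K
      {q⁻¹ • tens b c + (q + q⁻¹)⁻¹ • tens h h + q • tens c b,
       tens b b,
       q ^ 2 • tens b h + tens h b,
       q ^ 3 • tens b c - q • tens h h + q⁻¹ • tens c b,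
       q ^ 2 • tens h c + tens c h,
       tens c c,
       tens ℓ b + tens b ℓ,
       tens ℓ h + tens h ℓ,
       tens ℓ c + tens c ℓ,
       tens ℓ ℓ}) :
    ∀ u ∈ Im, ∀ v ∈ Ip, pairing2 q ε u v = 0 ∧ pairing2 q ε v u = 0 := by
  subst hℓ hh hb hc hIm hIp
  intro u hu v hv
  constructor
  · refine pairing2_span q ε _ _ ?_ u hu v hv
    intro u hu v hv
    simp only [Set.mem_insert_iff, Set.mem_singleton_iff] at hu hv
    rw [pairing2_eq]
    rcases hu with rfl|rfl|rfl|rfl|rfl|rfl <;>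
    rcases hv with rfl|rfl|rfl|rfl|rfl|rfl|rfl|rfl|rfl|rfl <;>
    simp [Fin.sum_univ_four, tens, genVec, Pi.single_apply] <;> field_simp <;> ring
  · refine pairing2_span q ε _ _ ?_ v hv u hu
    intro u hu v hv
    simp only [Set.mem_insert_iff, Set.mem_singleton_iff] at hu hv
    rw [pairing2_eq]
    rcases hu with rfl|rfl|rfl|rfl|rfl|rfl|rfl|rfl|rfl|rfl <;>
    rcases hv with rfl|rfl|rfl|rfl|rfl|rfl <;>
    simp [Fin.sum_univ_four, tens, genVec, Pi.single_apply] <;> field_simp <;> ring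

end
end

section
/- Let K be a field, q ∈ K nonzero with 2_q := q + q⁻¹ ≠ 0, ℏ ∈ K, and let A be a unital associative K-algebra with elements a, b, c, d. Set ℓ = q⁻¹a + qd and h = a − d. Then a,b,c,d satisfy the relations q·ab − q⁻¹·ba = ℏb; q·ca − q⁻¹·ac = ℏc; ad − da = 0; q(bc − cb) − (q−q⁻¹)a(d−a) = ℏ(a−d); q(cd − dc) − (q−q⁻¹)ca = −ℏc; q(db − bd) − (q−q⁻¹)ab = −ℏb, if and only if ℓ commutes with b, h, c and the relations q²hb − bh + (q−q⁻¹)ℓb = 2_qℏ·b; q²ch − hc + (q−q⁻¹)ℓc = 2_qℏ·c; 2_q·q(bc − cb) + (q²−1)h² + (q−q⁻¹)ℓh = 2_qℏ·h hold. -/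
/-- Equivalence of the two presentations of the modified reflection equation algebra
`𝓛(R_q,ℏ)` (standard `SL(2)` case): in the generators `a,b,c,d` and in the
generators `ℓ = q⁻¹a + qd`, `h = a − d`, `b`, `c`. -/
theorem stmt_18 (K : Type*) [Field K] (q ℏ : K) (hq : q ≠ 0) (h2q : q + q⁻¹ ≠ 0)
    (A : Type*) [Ring A] [Algebra K A] (a b c d : A)
    (ℓ h : A) (hℓ : ℓ = q⁻¹ • a + q • d) (hh : h = a - d) :
    (q • (a * b) - q⁻¹ • (b * a) = ℏ • b ∧
     q • (c * a) - q⁻¹ • (a * c) = ℏ • c ∧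
     a * d - d * a = 0 ∧
     q • (b * c - c * b) - (q - q⁻¹) • (a * (d - a)) = ℏ • (a - d) ∧
     q • (c * d - d * c) - (q - q⁻¹) • (c * a) = -(ℏ • c) ∧
     q • (d * b - b * d) - (q - q⁻¹) • (a * b) = -(ℏ • b)) ↔
    (ℓ * b = b * ℓ ∧ ℓ * h = h * ℓ ∧ ℓ * c = c * ℓ ∧
     q ^ 2 • (h * b) - b * h + (q - q⁻¹) • (ℓ * b) = ((q + q⁻¹) * ℏ) • b ∧
     q ^ 2 • (c * h) - h * c + (q - q⁻¹) • (ℓ * c) = ((q + q⁻¹) * ℏ) • c ∧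
     ((q + q⁻¹) * q) • (b * c - c * b) + (q ^ 2 - 1) • (h * h) +
       (q - q⁻¹) • (ℓ * h) = ((q + q⁻¹) * ℏ) • h) := by
  subst hℓ hh
  have ex : ∀ x y : A, x = y ↔ x - y = 0 := fun x y => sub_eq_zero.symm
  have F1 : (q⁻¹ • a + q • d) * b - b * (q⁻¹ • a + q • d) =
      (q • (a * b) - q⁻¹ • (b * a) - ℏ • b)
        + (q • (d * b - b * d) - (q - q⁻¹) • (a * b) - -(ℏ • b)) := by
    simp only [mul_add, add_mul, mul_sub, sub_mul, smul_mul_assoc, mul_smul_comm]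
    match_scalars <;> field_simp <;> ring
  have F2 : (q⁻¹ • a + q • d) * (a - d) - (a - d) * (q⁻¹ • a + q • d) =
      (-(q + q⁻¹)) • (a * d - d * a) := by
    simp only [mul_add, add_mul, mul_sub, sub_mul, smul_mul_assoc, mul_smul_comm]
    match_scalars <;> field_simp <;> ring
  have F3 : (q⁻¹ • a + q • d) * c - c * (q⁻¹ • a + q • d) =
      -((q • (c * a) - q⁻¹ • (a * c) - ℏ • c)
        + (q • (c * d - d * c) - (q - q⁻¹) • (c * a) - -(ℏ • c))) := by
    simp only [mul_add, add_mul, mul_sub, sub_mul, smul_mul_assoc, mul_smul_comm]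
    match_scalars <;> field_simp <;> ring
  have F4 : q ^ 2 • ((a - d) * b) - b * (a - d) + (q - q⁻¹) • ((q⁻¹ • a + q • d) * b)
        - ((q + q⁻¹) * ℏ) • b =
      (q + q⁻¹) • (q • (a * b) - q⁻¹ • (b * a) - ℏ • b)
        - q⁻¹ • ((q⁻¹ • a + q • d) * b - b * (q⁻¹ • a + q • d)) := by
    simp only [mul_add, add_mul, mul_sub, sub_mul, smul_mul_assoc, mul_smul_comm]
    match_scalars <;> field_simp <;> ring
  have F5 : q ^ 2 • (c * (a - d)) - (a - d) * c + (q - q⁻¹) • ((q⁻¹ • a + q • d) * c)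
        - ((q + q⁻¹) * ℏ) • c =
      (q + q⁻¹) • (q • (c * a) - q⁻¹ • (a * c) - ℏ • c)
        + q • ((q⁻¹ • a + q • d) * c - c * (q⁻¹ • a + q • d)) := by
    simp only [mul_add, add_mul, mul_sub, sub_mul, smul_mul_assoc, mul_smul_comm]
    match_scalars <;> field_simp <;> ring
  have F6 : ((q + q⁻¹) * q) • (b * c - c * b) + (q ^ 2 - 1) • ((a - d) * (a - d)) +
       (q - q⁻¹) • ((q⁻¹ • a + q • d) * (a - d)) - ((q + q⁻¹) * ℏ) • (a - d) =
      (q + q⁻¹) • (q • (b * c - c * b) - (q - q⁻¹) • (a * (d - a)) - ℏ • (a - d)) := by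
    simp only [mul_add, add_mul, mul_sub, sub_mul, smul_mul_assoc, mul_smul_comm]
    match_scalars <;> field_simp <;> ring
  constructor
  · rintro ⟨e1, e2, e3, e4, e5, e6⟩
    rw [ex] at e1 e2 e4 e5 e6
    rw [e1, e6, add_zero] at F1
    rw [e3, smul_zero] at F2
    rw [e2, e5, add_zero, neg_zero] at F3
    rw [e1, F1, smul_zero, smul_zero, sub_zero] at F4
    rw [e2, F3, smul_zero, smul_zero, add_zero] at F5
    rw [e4, smul_zero] at F6
    exact ⟨(ex _ _).2 F1, (ex _ _).2 F2, (ex _ _).2 F3, (ex _ _).2 F4, (ex _ _).2 F5,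
      (ex _ _).2 F6⟩
  · rintro ⟨f1, f2, f3, f4, f5, f6⟩
    rw [ex] at f1 f2 f3 f4 f5 f6
    rw [f4, f1, smul_zero, sub_zero] at F4
    rw [f5, f3, smul_zero, add_zero] at F5
    rw [f6] at F6
    rw [f2] at F2
    have e1 := (smul_eq_zero_iff_right h2q).1 F4.symm
    have e2 := (smul_eq_zero_iff_right h2q).1 F5.symm
    have e3 := (smul_eq_zero_iff_right (neg_ne_zero.2 h2q)).1 F2.symm
    have e4 := (smul_eq_zero_iff_right h2q).1 F6.symm
    rw [f1, e1, zero_add] at F1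
    rw [f3, e2, zero_add] at F3
    exact ⟨(ex _ _).2 e1, (ex _ _).2 e2, e3, (ex _ _).2 e4,
      (ex _ _).2 (neg_eq_zero.1 F3.symm), (ex _ _).2 F1.symm⟩
end

section
/- Let K be a field and a, b ∈ K. Let V be a 2-dimensional K-vector space with basis {x, y}, and define the linear operator R on V⊗V by R(x⊗x) = x⊗x, R(x⊗y) = b·x⊗x + y⊗x, R(y⊗x) = −b·x⊗x + x⊗y, R(y⊗y) = ab·x⊗x − a·x⊗y + a·y⊗x + y⊗y. Then R is an involutive symmetry: R² = Id on V⊗V, and R satisfies the Yang–Baxter relation R₁₂R₂₃R₁₂ = R₂₃R₁₂R₂₃ on V⊗V⊗V, where R₁₂ = R⊗Id and R₂₃ = Id⊗R. -/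
open Matrix Kronecker

set_option maxHeartbeats 4000000 in
/-- The two-parameter family of operators `R` on `V ⊗ V` (`V` two-dimensional with
basis `x, y`; basis of `V ⊗ V` ordered `x⊗x, x⊗y, y⊗x, y⊗y`; the matrix columns are
the images of the basis vectors) consists of involutive symmetries: `R² = Id` and
`R₁₂R₂₃R₁₂ = R₂₃R₁₂R₂₃`. -/
theorem stmt_19 (K : Type*) [Field K] (a b : K)
    (R : Matrix (Fin 2 × Fin 2) (Fin 2 × Fin 2) K)
    (hR : R = Matrix.reindex finProdFinEquiv.symm finProdFinEquiv.symm
      (!![1, b, -b, a * b;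
          0, 0, 1, -a;
          0, 1, 0, a;
          0, 0, 0, 1]))
    (R12 R23 : Matrix ((Fin 2 × Fin 2) × Fin 2) ((Fin 2 × Fin 2) × Fin 2) K)
    (hR12 : R12 = R ⊗ₖ (1 : Matrix (Fin 2) (Fin 2) K))
    (hR23 : R23 = Matrix.reindex (Equiv.prodAssoc (Fin 2) (Fin 2) (Fin 2)).symm
      (Equiv.prodAssoc (Fin 2) (Fin 2) (Fin 2)).symm
      ((1 : Matrix (Fin 2) (Fin 2) K) ⊗ₖ R)) :
    R * R = 1 ∧ R12 * R23 * R12 = R23 * R12 * R23 := by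
  have e : ∀ i j k l, R (i, j) (k, l) =
      (!![1, b, -b, a * b;
          0, 0, 1, -a;
          0, 1, 0, a;
          0, 0, 0, 1] : Matrix (Fin 4) (Fin 4) K)
        (finProdFinEquiv (i, j)) (finProdFinEquiv (k, l)) := by
    intro i j k l
    rw [hR]
    rfl
  have f00 : (finProdFinEquiv ((0 : Fin 2), (0 : Fin 2)) : Fin 4) = 0 := rfl
  have f01 : (finProdFinEquiv ((0 : Fin 2), (1 : Fin 2)) : Fin 4) = 1 := rfl
  have f10 : (finProdFinEquiv ((1 : Fin 2), (0 : Fin 2)) : Fin 4) = 2 := rfl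
  have f11 : (finProdFinEquiv ((1 : Fin 2), (1 : Fin 2)) : Fin 4) = 3 := rfl
  have e12 : ∀ i j k l m n, R12 ((i, j), k) ((l, m), n) =
      R (i, j) (l, m) * (if k = n then 1 else 0) := by
    intro i j k l m n
    rw [hR12]
    simp [Matrix.one_apply]
  have e23 : ∀ i j k l m n, R23 ((i, j), k) ((l, m), n) =
      (if i = l then 1 else 0) * R (j, k) (m, n) := by
    intro i j k l m n
    rw [hR23]
    simp [Matrix.one_apply]
  clear hR hR12 hR23
  constructor
  · ext ⟨i, j⟩ ⟨k, l⟩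
    fin_cases i <;> fin_cases j <;> fin_cases k <;> fin_cases l <;>
      simp [Matrix.mul_apply, Fintype.sum_prod_type, e, f00, f01, f10, f11, Matrix.one_apply] <;>
      ring
  · ext ⟨⟨i, j⟩, k⟩ ⟨⟨l, m⟩, n⟩
    fin_cases i <;> fin_cases j <;> fin_cases k <;> fin_cases l <;> fin_cases m <;> fin_cases n <;>
      simp [Matrix.mul_apply, Fintype.sum_prod_type, e12, e23, e, f00, f01, f10, f11] <;>
      ring
end
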